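/- arXiv:0805.3479 — 2 statements merged into one kernel-verified Lean document; each statement's English description precedes it below -/
import Mathlib

section
/- Let B_m = [4, 3, ..., 3] (with m-2 threes) be the Coxeter group of the m-cube, m ≥ 3, with standard generators r_0, ..., r_{m-1}. If φ : B_m → H is a group homomorphism which is injective on the dihedral subgroup ⟨r_0, r_1⟩ and on the subgroup ⟨r_1, ..., r_{m-1}⟩, then the kernel of φ is contained in the center {±e} of B_m (where -e is the central involution). -/
/-- The Coxeter matrix of the group `B_m = [4, 3, …, 3]` of the `m`-cube, with the
branch labelled `4` between nodes `0` and `1`. -/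
def BmMatrix (m : ℕ) : CoxeterMatrix (Fin m) where
  M := Matrix.of fun i j =>
    if i = j then 1
    else if ((i : ℕ) = 0 ∧ (j : ℕ) = 1) ∨ ((j : ℕ) = 0 ∧ (i : ℕ) = 1) then 4
    else if (i : ℕ) + 1 = (j : ℕ) ∨ (j : ℕ) + 1 = (i : ℕ) then 3
    else 2
  isSymm := by unfold Matrix.IsSymm; ext i j; simp only [Matrix.transpose_apply, Matrix.of_apply]; aesop
  diagonal := by simp
  off_diagonal := by aesop

structure BmSetup {W : Type*} [Group W] (m : ℕ) (r : ℕ → W) (ρ : W →* Equiv.Perm ℕ) : Prop where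
  sq : ∀ k, k < m → r k * r k = 1
  comm : ∀ j k, j + 2 ≤ k → k < m → r j * r k = r k * r j
  braid : ∀ k, 1 ≤ k → k + 1 < m → r k * r (k+1) * r k = r (k+1) * r k * r (k+1)
  four : r 0 * (r 1 * r 0 * r 1) = (r 1 * r 0 * r 1) * r 0
  rho0 : ρ (r 0) = 1
  rhoS : ∀ k, k + 1 < m → ρ (r (k+1)) = Equiv.swap k (k+1)
  gen : ∀ p : W → Prop, p 1 → (∀ w k, k < m → p w → p (r k * w)) → ∀ w, p w
  two : 2 ≤ m

/-- The sign changes. -/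
def bmS {W : Type*} [Group W] (r : ℕ → W) : ℕ → W
  | 0 => r 0
  | (k+1) => r (k+1) * bmS r k * r (k+1)

/-- Coset representatives. -/
def bmC {W : Type*} [Group W] (r : ℕ → W) : ℕ → ℕ → W
  | _, 0 => 1
  | j, (d+1) => r (j+1) * bmC r (j+1) d

namespace BmSetup

variable {W : Type*} [Group W] {m : ℕ} {r : ℕ → W} {ρ : W →* Equiv.Perm ℕ}

theorem inv (h : BmSetup m r ρ) {k : ℕ} (hk : k < m) : (r k)⁻¹ = r k :=
  inv_eq_of_mul_eq_one_left (h.sq k hk)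

/-- `r k` with `k > i + 1` commutes with `s i`. -/
theorem s_comm_hi (h : BmSetup m r ρ) (i k : ℕ) (hik : i + 2 ≤ k) (hk : k < m) :
    Commute (r k) (bmS r i) := by
  induction i with
  | zero => exact (h.comm 0 k hik hk).symm
  | succ i ih =>
    have h1 : Commute (r k) (r (i+1)) := (h.comm (i+1) k hik hk).symm
    exact (h1.mul_right (ih (by omega))).mul_right h1

theorem s_comm_lo (h : BmSetup m r ρ) (i k : ℕ) (hik : k < i) (hi : i < m) (hk : 1 ≤ k) :
    Commute (r k) (bmS r i) := by
  induction i with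
  | zero => omega
  | succ i ih =>
    rcases Nat.lt_or_ge k i with hlt | hge
    · have h1 : Commute (r k) (r (i+1)) := h.comm k (i+1) (by omega) hi
      exact (h1.mul_right (ih hlt (by omega))).mul_right h1
    · obtain rfl : k = i := by omega
      obtain ⟨l, rfl⟩ : ∃ l, k = l + 1 := ⟨k - 1, by omega⟩
      have hb := h.braid (l+1) hk hi
      have hc := h.s_comm_hi l (l+1+1) (by omega) hi
      show r (l+1) * (r (l+1+1) * (r (l+1) * bmS r l * r (l+1)) * r (l+1+1))
        = (r (l+1+1) * (r (l+1) * bmS r l * r (l+1)) * r (l+1+1)) * r (l+1)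
      generalize r (l+1) = a at *
      generalize r (l+1+1) = b at *
      generalize bmS r l = s at *
      calc a * (b * (a * s * a) * b) = (a * b * a) * s * (a * b) := by group
        _ = b * a * (b * s) * (a * b) := by rw [hb]; group
        _ = b * a * s * (b * a * b) := by rw [hc.eq]; group
        _ = _ := by rw [← hb]; group

theorem r_s (h : BmSetup m r ρ) (i k : ℕ) (hi : i < m) (hk : k < m) :
    ρ (r k) i < m ∧ r k * bmS r i * (r k)⁻¹ = bmS r (ρ (r k) i) := by
  rcases k with _ | k
  · rw [h.rho0]
    refine ⟨hi, ?_⟩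
    rw [mul_inv_eq_iff_eq_mul]
    show Commute (r 0) (bmS r i)
    rcases i with _ | i
    · exact Commute.refl _
    · induction i with
      | zero => exact h.four
      | succ i ih =>
        have h1 : Commute (r 0) (r (i+1+1)) := h.comm 0 (i+1+1) (by omega) hi
        exact (h1.mul_right (ih (by omega))).mul_right h1
  · rw [h.rhoS k hk]
    by_cases h1 : i = k
    · subst h1
      rw [Equiv.swap_apply_left, h.inv hk]
      exact ⟨hk, rfl⟩
    by_cases h2 : i = k + 1
    · subst h2
      rw [Equiv.swap_apply_right, h.inv hk]
      refine ⟨by omega, ?_⟩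
      show r (k+1) * (r (k+1) * bmS r k * r (k+1)) * r (k+1) = bmS r k
      have := h.sq _ hk
      simp only [mul_assoc, this, mul_one]
      rw [← mul_assoc, this, one_mul]
    · rw [Equiv.swap_apply_of_ne_of_ne h1 h2]
      refine ⟨hi, ?_⟩
      rw [mul_inv_eq_iff_eq_mul]
      rcases Nat.lt_or_ge i (k+1) with hl | hg
      · exact (h.s_comm_hi i (k+1) (by omega) hk).eq
      · exact (h.s_comm_lo i (k+1) (by omega) hi (by omega)).eq

theorem conj_s (h : BmSetup m r ρ) (w : W) : ∀ i, i < m →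
    ρ w i < m ∧ w * bmS r i * w⁻¹ = bmS r (ρ w i) := by
  refine h.gen (fun w => ∀ i, i < m → ρ w i < m ∧ w * bmS r i * w⁻¹ = bmS r (ρ w i)) ?_ ?_ w
  · intro i hi
    simpa using hi
  · intro w k hk ih i hi
    obtain ⟨h1, h2⟩ := ih i hi
    obtain ⟨h3, h4⟩ := h.r_s (ρ w i) k h1 hk
    rw [map_mul, Equiv.Perm.mul_apply]
    refine ⟨h3, ?_⟩
    rw [← h4, ← h2]; group

theorem rho_s (h : BmSetup m r ρ) (i : ℕ) (hi : i < m) : ρ (bmS r i) = 1 := by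
  induction i with
  | zero => exact h.rho0
  | succ i ih =>
    show ρ (r (i+1) * bmS r i * r (i+1)) = 1
    rw [map_mul, map_mul, ih (by omega), mul_one, ← map_mul, h.sq _ hi, map_one]

theorem s_comm (h : BmSetup m r ρ) (i j : ℕ) (hi : i < m) (hj : j < m) :
    Commute (bmS r i) (bmS r j) := by
  have := (h.conj_s (bmS r i) j hj).2
  rw [h.rho_s i hi, mul_inv_eq_iff_eq_mul] at this
  exact this

theorem s_sq (h : BmSetup m r ρ) (i : ℕ) (hi : i < m) : bmS r i * bmS r i = 1 := by
  induction i with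
  | zero => exact h.sq 0 hi
  | succ i ih =>
    show (r (i+1) * bmS r i * r (i+1)) * (r (i+1) * bmS r i * r (i+1)) = 1
    have h1 := h.sq _ hi
    have h2 := ih (by omega)
    calc _ = r (i+1) * bmS r i * (r (i+1) * r (i+1)) * bmS r i * r (i+1) := by group
      _ = r (i+1) * (bmS r i * bmS r i) * r (i+1) := by rw [h1]; group
      _ = 1 := by rw [h2, mul_one, h1]

/-- 2-transitivity. -/
theorem to01 (h : BmSetup m r ρ) (K : Subgroup W) [K.Normal] (a b : ℕ) (hab : a < b) (hb : b < m)
    (hK : bmS r a * bmS r b ∈ K) : bmS r 0 * bmS r 1 ∈ K := by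
  have key : ∀ w, bmS r (ρ w a) * bmS r (ρ w b) ∈ K := by
    intro w
    rw [← (h.conj_s w a (by omega)).2, ← (h.conj_s w b hb).2]
    have := Subgroup.Normal.conj_mem ‹K.Normal› _ hK w
    convert this using 1; group
  induction a with
  | zero =>
    induction b with
    | zero => omega
    | succ b ih =>
      rcases b with _ | b
      · exact hK
      · have hk := key (r (b+1+1))
        rw [h.rhoS _ hb, Equiv.swap_apply_right,
          Equiv.swap_apply_of_ne_of_ne (by omega) (by omega)] at hk
        refine ih (by omega) (by omega) hk ?_
        intro w
        rw [← (h.conj_s w 0 (by omega)).2, ← (h.conj_s w (b+1) (by omega)).2]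
        have := Subgroup.Normal.conj_mem ‹K.Normal› _ hk w
        convert this using 1; group
  | succ a ih =>
    have hk := key (r (a+1))
    rw [h.rhoS _ (by omega), Equiv.swap_apply_right,
      Equiv.swap_apply_of_ne_of_ne (by omega) (by omega)] at hk
    refine ih (by omega) hk ?_
    intro w
    rw [← (h.conj_s w a (by omega)).2, ← (h.conj_s w b (by omega)).2]
    have := Subgroup.Normal.conj_mem ‹K.Normal› _ hk w
    convert this using 1; group

theorem to01' (h : BmSetup m r ρ) (K : Subgroup W) [K.Normal] (a b : ℕ) (hab : a ≠ b) (ha : a < m)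
    (hb : b < m) (hK : bmS r a * bmS r b ∈ K) : bmS r 0 * bmS r 1 ∈ K := by
  rcases Nat.lt_or_gt_of_ne hab with hl | hl
  · exact h.to01 K a b hl hb hK
  · rw [(h.s_comm a b ha hb).eq] at hK
    exact h.to01 K b a hl ha hK

/-! The symmetric group part -/

theorem c_comm_lo (h : BmSetup m r ρ) (d : ℕ) : ∀ i j, i < j → j + d < m →
    Commute (r i) (bmC r j d) := by
  induction d with
  | zero => intro i j _ _; exact Commute.one_right _
  | succ d ih =>
    intro i j hij hd
    have h1 : Commute (r i) (r (j+1)) := h.comm i (j+1) (by omega) (by omega)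
    exact h1.mul_right (ih i (j+1) (by omega) (by omega))

theorem c_hi (h : BmSetup m r ρ) (d : ℕ) : ∀ i j, j + 1 ≤ i → i + 1 ≤ j + d → j + d < m →
    r (i+1) * bmC r j d = bmC r j d * r i := by
  induction d with
  | zero => intro i j _ _; omega
  | succ d ih =>
    intro i j hij hi hd
    rcases Nat.lt_or_ge (j+1) i with hl | hg
    · have h1 := h.comm (j+1) (i+1) (by omega) (by omega)
      show r (i+1) * (r (j+1) * bmC r (j+1) d) = r (j+1) * bmC r (j+1) d * r i
      rw [← mul_assoc, ← h1, mul_assoc, ih i (j+1) (by omega) (by omega) (by omega), mul_assoc]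
    · obtain rfl : i = j + 1 := by omega
      obtain ⟨e, rfl⟩ : ∃ e, d = e + 1 := ⟨d - 1, by omega⟩
      have h1 := h.braid (j+1) (by omega) (by omega)
      have h2 := h.c_comm_lo e (j+1) (j+1+1) (by omega) (by omega)
      show r (j+1+1) * (r (j+1) * (r (j+1+1) * bmC r (j+1+1) e))
        = r (j+1) * (r (j+1+1) * bmC r (j+1+1) e) * r (j+1)
      rw [mul_assoc, mul_assoc, ← h2.eq]
      simp only [← mul_assoc]
      rw [← h1]

theorem rho_c (h : BmSetup m r ρ) (d : ℕ) : ∀ j, j + d < m → ρ (bmC r j d) (j + d) = j := by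
  induction d with
  | zero => intro j _; simp [bmC]
  | succ d ih =>
    intro j hd
    have := ih (j+1) (by omega)
    rw [show j + 1 + d = j + (d + 1) by omega] at this
    show ρ (r (j+1) * bmC r (j+1) d) (j + (d+1)) = j
    rw [map_mul, Equiv.Perm.mul_apply, this, h.rhoS _ (by omega), Equiv.swap_apply_right]

end BmSetup

/-- The subgroup generated by `r 1, …, r k`. -/
def bmA {W : Type*} [Group W] (r : ℕ → W) (k : ℕ) : Subgroup W :=
  Subgroup.closure {x | ∃ i, 1 ≤ i ∧ i ≤ k ∧ x = r i}

namespace BmSetup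

variable {W : Type*} [Group W] {m : ℕ} {r : ℕ → W} {ρ : W →* Equiv.Perm ℕ}

theorem mem_A {i k : ℕ} (hi : 1 ≤ i) (hk : i ≤ k) : r i ∈ bmA r k :=
  Subgroup.subset_closure ⟨i, hi, hk, rfl⟩

theorem rho_A (h : BmSetup m r ρ) (k : ℕ) (hk : k < m) (w : W) (hw : w ∈ bmA r k) (x : ℕ)
    (hx : k < x) : ρ w x = x := by
  have : bmA r k ≤ (MulAction.stabilizer (Equiv.Perm ℕ) x).comap ρ := by
    refine (Subgroup.closure_le _).2 ?_
    rintro _ ⟨i, h1, h2, rfl⟩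
    obtain ⟨l, rfl⟩ : ∃ l, i = l + 1 := ⟨i - 1, by omega⟩
    show ρ (r (l+1)) x = x
    rw [h.rhoS l (by omega)]
    exact Equiv.swap_apply_of_ne_of_ne (by omega) (by omega)
  exact this hw

theorem A_decomp (h : BmSetup m r ρ) (k : ℕ) (hk : k + 1 < m) (w : W) (hw : w ∈ bmA r (k+1)) :
    ∃ j d u, j + d = k + 1 ∧ u ∈ bmA r k ∧ w = bmC r j d * u := by
  have step : ∀ i, 1 ≤ i → i ≤ k + 1 → ∀ y : W,
      (∃ j d u, j + d = k + 1 ∧ u ∈ bmA r k ∧ y = bmC r j d * u) →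
      (∃ j d u, j + d = k + 1 ∧ u ∈ bmA r k ∧ r i * y = bmC r j d * u) := by
    rintro i hi hik _ ⟨j, d, u, hjd, hu, rfl⟩
    rcases Nat.lt_trichotomy i j with hl | rfl | hg
    · refine ⟨j, d, r i * u, hjd, mul_mem (mem_A hi (by omega)) hu, ?_⟩
      rw [← mul_assoc, (h.c_comm_lo d i j hl (by omega)).eq, mul_assoc]
    · obtain ⟨l, rfl⟩ : ∃ l, i = l + 1 := ⟨i - 1, by omega⟩
      refine ⟨l, d + 1, u, by omega, hu, ?_⟩
      show _ = r (l+1) * bmC r (l+1) d * u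
      rw [mul_assoc]
    · obtain ⟨l, rfl⟩ : ∃ l, i = l + 1 := ⟨i - 1, by omega⟩
      rcases Nat.lt_or_ge j l with hl | hg
      · refine ⟨j, d, r l * u, hjd, mul_mem (mem_A (by omega) (by omega)) hu, ?_⟩
        rw [← mul_assoc, h.c_hi d l j (by omega) (by omega) (by omega), mul_assoc]
      · obtain rfl : l = j := by omega
        obtain ⟨e, rfl⟩ : ∃ e, d = e + 1 := ⟨d - 1, by omega⟩
        refine ⟨l + 1, e, u, by omega, hu, ?_⟩
        show r (l+1) * (r (l+1) * bmC r (l+1) e * u) = _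
        rw [← mul_assoc, ← mul_assoc, h.sq _ (by omega), one_mul]
  refine Subgroup.closure_induction_left
    (p := fun w _ => ∃ j d u, j + d = k + 1 ∧ u ∈ bmA r k ∧ w = bmC r j d * u) ?_ ?_ ?_ hw
  · exact ⟨k+1, 0, 1, rfl, one_mem _, by simp [bmC]⟩
  · rintro _ ⟨i, h1, h2, rfl⟩ y _ hy
    exact step i h1 h2 y hy
  · rintro _ ⟨i, h1, h2, rfl⟩ y _ hy
    rw [h.inv (by omega)]
    exact step i h1 h2 y hy

theorem A_faithful (h : BmSetup m r ρ) (k : ℕ) (hk : k < m) (w : W) (hw : w ∈ bmA r k)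
    (hfix : ∀ i, i < m → ρ w i = i) : w = 1 := by
  induction k with
  | zero =>
    have : bmA r 0 = ⊥ := by
      refine (Subgroup.closure_eq_bot_iff).2 ?_
      rintro _ ⟨i, h1, h2, _⟩
      omega
    rw [this] at hw
    exact hw
  | succ k ih =>
    obtain ⟨j, d, u, hjd, hu, rfl⟩ := h.A_decomp k hk w hw
    have h1 := hfix (k+1) hk
    rw [map_mul, Equiv.Perm.mul_apply, h.rho_A k (by omega) u hu (k+1) (by omega), ← hjd,
      h.rho_c d j (by omega)] at h1
    obtain rfl : d = 0 := by omega
    refine ih (by omega) ?_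
    simpa [bmC] using hu

/-- The subgroup of sign changes. -/
def N (r : ℕ → W) (m : ℕ) : Subgroup W := Subgroup.closure {x | ∃ i, i < m ∧ x = bmS r i}

theorem N_conj (h : BmSetup m r ρ) (w x : W) (hx : x ∈ N r m) : w * x * w⁻¹ ∈ N r m := by
  have : N r m ≤ (N r m).comap (MulAut.conj w).toMonoidHom := by
    refine (Subgroup.closure_le _).2 ?_
    rintro _ ⟨i, hi, rfl⟩
    show w * bmS r i * w⁻¹ ∈ N r m
    obtain ⟨h1, h2⟩ := h.conj_s w i hi
    rw [h2]
    exact Subgroup.subset_closure ⟨_, h1, rfl⟩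
  exact this hx

theorem N_comm (h : BmSetup m r ρ) (x y : W) (hx : x ∈ N r m) (hy : y ∈ N r m) : Commute x y := by
  have h1 : ∀ i, i < m → ∀ y ∈ N r m, Commute (bmS r i) y := by
    intro i hi y hy
    have : N r m ≤ Subgroup.centralizer {bmS r i} := by
      refine (Subgroup.closure_le _).2 ?_
      rintro _ ⟨j, hj, rfl⟩
      rw [SetLike.mem_coe, Subgroup.mem_centralizer_singleton_iff]
      exact (h.s_comm j i hj hi)
    exact (Subgroup.mem_centralizer_singleton_iff.1 (this hy)).symm
  have : N r m ≤ Subgroup.centralizer {y} := by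
    refine (Subgroup.closure_le _).2 ?_
    rintro _ ⟨j, hj, rfl⟩
    rw [SetLike.mem_coe, Subgroup.mem_centralizer_singleton_iff]
    exact h1 j hj y hy
  exact Subgroup.mem_centralizer_singleton_iff.1 (this hx)

theorem rho_N (h : BmSetup m r ρ) (x : W) (hx : x ∈ N r m) : ρ x = 1 := by
  have : N r m ≤ ρ.ker := by
    refine (Subgroup.closure_le _).2 ?_
    rintro _ ⟨j, hj, rfl⟩
    exact h.rho_s j hj
  exact this hx

theorem decomp (h : BmSetup m r ρ) (g : W) : ∃ n ∈ N r m, ∃ w ∈ bmA r (m-1), g = n * w := by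
  refine h.gen (fun g => ∃ n ∈ N r m, ∃ w ∈ bmA r (m-1), g = n * w) ?_ ?_ g
  · exact ⟨1, one_mem _, 1, one_mem _, by simp⟩
  · rintro _ k hk ⟨n, hn, w, hw, rfl⟩
    rcases k with _ | k
    · exact ⟨r 0 * n, mul_mem (Subgroup.subset_closure ⟨0, hk, rfl⟩) hn, w, hw, by group⟩
    · exact ⟨r (k+1) * n * (r (k+1))⁻¹, h.N_conj _ _ hn, r (k+1) * w,
        mul_mem (mem_A (by omega) (by omega)) hw, by group⟩

theorem N_r (h : BmSetup m r ρ) (k : ℕ) (hk : k + 1 < m) (n : W) (hn : n ∈ N r m) :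
    n * r (k+1) * n⁻¹ * (r (k+1))⁻¹ = 1 ∨
    n * r (k+1) * n⁻¹ * (r (k+1))⁻¹ = bmS r k * bmS r (k+1) := by
  have hp : (bmS r k * bmS r (k+1)) * (bmS r k * bmS r (k+1)) = 1 := by
    have h1 := h.s_comm k (k+1) (by omega) hk
    have h2 := h.s_sq k (by omega)
    have h3 := h.s_sq (k+1) hk
    calc _ = bmS r k * (bmS r (k+1) * bmS r k) * bmS r (k+1) := by group
      _ = (bmS r k * bmS r k) * (bmS r (k+1) * bmS r (k+1)) := by rw [← h1.eq]; group
      _ = 1 := by rw [h2, h3, one_mul]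
  have hpN : bmS r k * bmS r (k+1) ∈ N r m :=
    mul_mem (Subgroup.subset_closure ⟨k, by omega, rfl⟩) (Subgroup.subset_closure ⟨k+1, hk, rfl⟩)
  have step : ∀ i, i < m → ∀ y ∈ N r m,
      (y * r (k+1) * y⁻¹ * (r (k+1))⁻¹ = 1 ∨
        y * r (k+1) * y⁻¹ * (r (k+1))⁻¹ = bmS r k * bmS r (k+1)) →
      ((bmS r i * y) * r (k+1) * (bmS r i * y)⁻¹ * (r (k+1))⁻¹ = 1 ∨
        (bmS r i * y) * r (k+1) * (bmS r i * y)⁻¹ * (r (k+1))⁻¹ = bmS r k * bmS r (k+1)) := by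
    intro i hi y hy hcase
    have hsi : bmS r i ∈ N r m := Subgroup.subset_closure ⟨i, hi, rfl⟩
    have hinv : (bmS r i)⁻¹ = bmS r i := inv_eq_of_mul_eq_one_left (h.s_sq i hi)
    have hF : y * r (k+1) * y⁻¹ * (r (k+1))⁻¹ ∈ N r m := by
      rcases hcase with e | e <;> rw [e]
      · exact one_mem _
      · exact hpN
    have hc := h.N_comm _ _ hsi hF
    have hs : bmS r i * r (k+1) * (bmS r i)⁻¹ * (r (k+1))⁻¹ = 1 ∨
        bmS r i * r (k+1) * (bmS r i)⁻¹ * (r (k+1))⁻¹ = bmS r k * bmS r (k+1) := by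
      have h1 := (h.conj_s (r (k+1)) i hi).2
      have h2 : bmS r i * r (k+1) * (bmS r i)⁻¹ * (r (k+1))⁻¹
          = bmS r i * bmS r (ρ (r (k+1)) i) := by
        rw [← h1, hinv]; group
      rw [h2, h.rhoS k hk]
      by_cases e1 : i = k
      · subst e1; right; rw [Equiv.swap_apply_left]
      by_cases e2 : i = k + 1
      · subst e2; right; rw [Equiv.swap_apply_right]; exact (h.s_comm _ _ hi (by omega)).eq
      · left; rw [Equiv.swap_apply_of_ne_of_ne e1 e2]; exact h.s_sq i hi
    have e : (bmS r i * y) * r (k+1) * (bmS r i * y)⁻¹ * (r (k+1))⁻¹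
        = (y * r (k+1) * y⁻¹ * (r (k+1))⁻¹)
          * (bmS r i * r (k+1) * (bmS r i)⁻¹ * (r (k+1))⁻¹) := by
      calc _ = (bmS r i * (y * r (k+1) * y⁻¹ * (r (k+1))⁻¹))
          * (r (k+1) * (bmS r i)⁻¹ * (r (k+1))⁻¹) := by group
        _ = _ := by rw [hc.eq]; group
    rw [e]
    rcases hcase with e1 | e1 <;> rcases hs with e2 | e2 <;> rw [e1, e2]
    · left; simp
    · right; simp
    · right; simp
    · left; exact hp
  refine Subgroup.closure_induction_left
    (p := fun n _ => n * r (k+1) * n⁻¹ * (r (k+1))⁻¹ = 1 ∨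
      n * r (k+1) * n⁻¹ * (r (k+1))⁻¹ = bmS r k * bmS r (k+1)) ?_ ?_ ?_ hn
  · left; simp
  · rintro _ ⟨i, hi, rfl⟩ y hy hh
    exact step i hi y hy hh
  · rintro _ ⟨i, hi, rfl⟩ y hy hh
    rw [inv_eq_of_mul_eq_one_left (h.s_sq i hi)]
    exact step i hi y hy hh

theorem main (h : BmSetup m r ρ) (K : Subgroup W) [hKn : K.Normal]
    (hK : bmS r 0 * bmS r 1 ∉ K) : K ≤ Subgroup.center W := by
  intro g hg
  obtain ⟨n, hn, w, hw, rfl⟩ := h.decomp g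
  have h2 := h.two
  have hfix : ∀ i, i < m → ρ w i = i := by
    intro i hi
    by_contra hne
    obtain ⟨h1, h2⟩ := h.conj_s (n * w) i hi
    have e : ρ (n * w) = ρ w := by rw [map_mul, h.rho_N n hn, one_mul]
    rw [e] at h1 h2
    apply hK
    refine h.to01' K (ρ w i) i hne h1 hi ?_
    rw [← h2]
    have := mul_mem hg (hKn.conj_mem _ (inv_mem hg) (bmS r i))
    rw [inv_eq_of_mul_eq_one_left (h.s_sq i hi)] at this
    convert this using 1; group
  have hw1 := h.A_faithful (m-1) (by omega) w hw hfix
  subst hw1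
  rw [mul_one] at hg ⊢
  rw [Subgroup.mem_center_iff]
  have hgen : ∀ k, k < m → Commute (r k) n := by
    intro k hk
    rcases k with _ | k
    · exact h.N_comm _ _ (Subgroup.subset_closure ⟨0, hk, rfl⟩) hn
    · rcases h.N_r k hk n hn with e | e
      · rw [mul_inv_eq_one, mul_inv_eq_iff_eq_mul] at e
        exact e.symm
      · exfalso
        apply hK
        refine h.to01 K k (k+1) (by omega) hk ?_
        rw [← e]
        have := mul_mem hg (hKn.conj_mem _ (inv_mem hg) (r (k+1)))
        convert this using 1; group
  intro x
  refine h.gen (fun x => x * n = n * x) (by simp) ?_ x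
  intro w k hk hh
  exact Commute.mul_left (hgen k hk) hh

end BmSetup

/-- Generator images in permutations. -/
def bmRho (i : ℕ) : Equiv.Perm ℕ := if i = 0 then 1 else Equiv.swap (i-1) i

/-- Lift of a permutation of `ℕ` to signed points. -/
def bmTheta : Equiv.Perm ℕ →* Equiv.Perm (ℕ × Bool) where
  toFun e := Equiv.prodCongr e (Equiv.refl Bool)
  map_one' := by ext x <;> rfl
  map_mul' a b := by ext x <;> rfl

/-- Generator images in signed permutations. -/
def bmSig (i : ℕ) : Equiv.Perm (ℕ × Bool) :=
  if i = 0 then Equiv.swap (0, false) (0, true) else bmTheta (Equiv.swap (i-1) i)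

theorem bm_swap_comm (a b : ℕ) (hab : a + 2 ≤ b) :
    Equiv.swap a (a+1) * Equiv.swap b (b+1) = Equiv.swap b (b+1) * Equiv.swap a (a+1) := by
  ext x
  simp only [Equiv.Perm.mul_apply, Equiv.swap_apply_def]
  split_ifs <;> omega

theorem bm_swap_three (a : ℕ) :
    (Equiv.swap a (a+1) * Equiv.swap (a+1) (a+2)) ^ 3 = 1 := by
  ext x
  simp only [pow_succ, pow_zero, one_mul, Equiv.Perm.mul_apply, Equiv.Perm.one_apply]
  by_cases h0 : x = a
  · subst h0; simp [Equiv.swap_apply_def]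
  by_cases h1 : x = a + 1
  · subst h1; simp [Equiv.swap_apply_def]
  by_cases h2 : x = a + 2
  · subst h2; simp [Equiv.swap_apply_def]
  · simp [Equiv.swap_apply_def, h0, h1, h2]

theorem bm_rel_symm {G : Type*} [Group G] {a b : G} {k : ℕ} (h : (a * b) ^ k = 1) :
    (b * a) ^ k = 1 := by
  have : b * a = a⁻¹ * (a * b) * a⁻¹⁻¹ := by group
  rw [this, conj_pow, h]; group

/-- A `ℕ`-indexed family satisfying the relations is liftable. -/
theorem bm_liftable {G : Type*} [Group G] (m : ℕ) (f : ℕ → G)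
    (h1 : ∀ k, f k * f k = 1) (h4 : (f 0 * f 1) ^ 4 = 1)
    (h3 : ∀ k, 1 ≤ k → (f k * f (k+1)) ^ 3 = 1)
    (h2 : ∀ j k, j + 2 ≤ k → f j * f k = f k * f j) :
    (BmMatrix m).IsLiftable (fun i : Fin m => f i) := by
  have key : ∀ i j : Fin m, (i : ℕ) ≤ j → (f i * f j) ^ ((BmMatrix m) i j) = 1 := by
    intro i j hij
    obtain ⟨i, hi⟩ := i
    obtain ⟨j, hj⟩ := j
    simp only [BmMatrix, Matrix.of_apply, Fin.mk.injEq] at hij ⊢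
    split_ifs with e1 e2 e3
    · subst e1; simpa using h1 i
    · obtain ⟨rfl, rfl⟩ : i = 0 ∧ j = 1 := by omega
      exact h4
    · obtain rfl : j = i + 1 := by omega
      exact h3 i (by omega)
    · have := h2 i j (by omega)
      rw [pow_two]
      calc f i * f j * (f i * f j) = f i * (f j * f i) * f j := by group
        _ = (f i * f i) * (f j * f j) := by rw [← this]; group
        _ = 1 := by rw [h1, h1, one_mul]
  intro i j
  rcases le_total (i : ℕ) j with h | h
  · exact key i j h
  · rw [(BmMatrix m).symmetric]
    exact bm_rel_symm (key j i h)

theorem bm_rho_liftable (m : ℕ) : (BmMatrix m).IsLiftable (fun i : Fin m => bmRho i) := by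
  apply bm_liftable
  · intro k
    unfold bmRho
    split_ifs <;> simp
  · have : bmRho 1 * bmRho 1 = 1 := by simp [bmRho]
    simp only [show bmRho 0 = 1 from rfl, one_mul]
    rw [show 4 = 2 * 2 from rfl, pow_mul, pow_two (bmRho 1), this, one_pow]
  · intro k hk
    obtain ⟨l, rfl⟩ : ∃ l, k = l + 1 := ⟨k - 1, by omega⟩
    exact bm_swap_three l
  · intro j k hjk
    obtain ⟨l, rfl⟩ : ∃ l, k = l + 1 := ⟨k - 1, by omega⟩
    rcases j with _ | j
    · simp [bmRho]
    · exact bm_swap_comm j l (by omega)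

theorem bm_sig_liftable (m : ℕ) : (BmMatrix m).IsLiftable (fun i : Fin m => bmSig i) := by
  apply bm_liftable
  · intro k
    unfold bmSig
    split_ifs
    · simp
    · rw [← map_mul]; simp
  · ext ⟨x, b⟩ : 1
    rcases x with _ | _ | x
    · cases b <;> decide
    · cases b <;> decide
    · have h0 : bmSig 0 (x+1+1, b) = (x+1+1, b) :=
        Equiv.swap_apply_of_ne_of_ne (by simp) (by simp)
      have h1 : bmSig 1 (x+1+1, b) = (x+1+1, b) := by
        show (Equiv.swap 0 1 (x+1+1), b) = _
        rw [Equiv.swap_apply_of_ne_of_ne (by omega) (by omega)]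
      simp only [pow_succ, pow_zero, one_mul, Equiv.Perm.mul_apply, h0, h1, Equiv.Perm.one_apply]
  · intro k hk
    obtain ⟨l, rfl⟩ : ∃ l, k = l + 1 := ⟨k - 1, by omega⟩
    show (bmTheta (Equiv.swap l (l+1)) * bmTheta (Equiv.swap (l+1) (l+2))) ^ 3 = 1
    rw [← map_mul, ← map_pow, bm_swap_three, map_one]
  · intro j k hjk
    obtain ⟨l, rfl⟩ : ∃ l, k = l + 1 := ⟨k - 1, by omega⟩
    rcases j with _ | j
    · show Equiv.swap (0, false) (0, true) * bmTheta (Equiv.swap l (l+1))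
        = bmTheta (Equiv.swap l (l+1)) * Equiv.swap (0, false) (0, true)
      have e : Equiv.swap l (l+1) 0 = 0 := Equiv.swap_apply_of_ne_of_ne (by omega) (by omega)
      have hh := Equiv.mul_swap_eq_swap_mul (bmTheta (Equiv.swap l (l+1))) (0, false) (0, true)
      rw [hh]
      show _ = Equiv.swap (Equiv.swap l (l+1) 0, false) (Equiv.swap l (l+1) 0, true) * _
      rw [e]
    · show bmTheta (Equiv.swap j (j+1)) * bmTheta (Equiv.swap l (l+1))
        = bmTheta (Equiv.swap l (l+1)) * bmTheta (Equiv.swap j (j+1))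
      rw [← map_mul, ← map_mul, bm_swap_comm j l (by omega)]

/-- `ℕ`-indexed generators. -/
noncomputable def bmR (m : ℕ) (k : ℕ) : (BmMatrix m).Group :=
  if h : k < m then (BmMatrix m).simple ⟨k, h⟩ else 1

theorem bmR_eq {m k : ℕ} (h : k < m) : bmR m k = (BmMatrix m).simple ⟨k, h⟩ := dif_pos h

theorem bm_rel (m : ℕ) (i j : ℕ) (hi : i < m) (hj : j < m) :
    (bmR m i * bmR m j) ^ ((BmMatrix m) ⟨i, hi⟩ ⟨j, hj⟩) = 1 := by
  rw [bmR_eq hi, bmR_eq hj]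
  exact (BmMatrix m).toCoxeterSystem.simple_mul_simple_pow ⟨i, hi⟩ ⟨j, hj⟩

theorem bm_setup (m : ℕ) (hm : 3 ≤ m) :
    BmSetup m (bmR m) ((BmMatrix m).toCoxeterSystem.lift ⟨_, bm_rho_liftable m⟩) := by
  have hsq : ∀ k, k < m → bmR m k * bmR m k = 1 := by
    intro k hk
    have := bm_rel m k k hk hk
    rwa [(BmMatrix m).diagonal, pow_one] at this
  have hinv : ∀ k, k < m → (bmR m k)⁻¹ = bmR m k :=
    fun k hk => inv_eq_of_mul_eq_one_left (hsq k hk)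
  have hl : ∀ k, k < m →
      (BmMatrix m).toCoxeterSystem.lift ⟨_, bm_rho_liftable m⟩ (bmR m k) = bmRho k := by
    intro k hk
    rw [bmR_eq hk]
    exact (BmMatrix m).toCoxeterSystem.lift_apply_simple (bm_rho_liftable m) ⟨k, hk⟩
  refine ⟨hsq, ?_, ?_, ?_, ?_, ?_, ?_, by omega⟩
  · intro j k hjk hk
    have := bm_rel m j k (by omega) hk
    rw [show (BmMatrix m) ⟨j, by omega⟩ ⟨k, hk⟩ = 2 by
      simp only [BmMatrix, Matrix.of_apply, Fin.mk.injEq]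
      rw [if_neg (by omega), if_neg (by omega), if_neg (by omega)]] at this
    rw [pow_two] at this
    have := eq_inv_of_mul_eq_one_left this
    rwa [mul_inv_rev, hinv j (by omega), hinv k hk] at this
  · intro k h1 hk
    have := bm_rel m k (k+1) (by omega) hk
    rw [show (BmMatrix m) ⟨k, by omega⟩ ⟨k+1, hk⟩ = 3 by
      simp only [BmMatrix, Matrix.of_apply, Fin.mk.injEq]
      rw [if_neg (by omega), if_neg (by omega)]; simp] at this
    have := eq_inv_of_mul_eq_one_left
      (a := bmR m k * bmR m (k+1) * bmR m k) (b := bmR m (k+1) * bmR m k * bmR m (k+1))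
      (by rw [← this]; simp only [pow_succ, pow_zero, one_mul, mul_assoc])
    rw [this]
    simp only [mul_inv_rev, hinv k (by omega), hinv (k+1) hk, mul_assoc]
  · have := bm_rel m 0 1 (by omega) (by omega)
    rw [show (BmMatrix m) ⟨0, by omega⟩ ⟨1, by omega⟩ = 4 by
      simp [BmMatrix, Matrix.of_apply]] at this
    have := eq_inv_of_mul_eq_one_left
      (a := bmR m 0 * (bmR m 1 * bmR m 0 * bmR m 1))
      (b := bmR m 0 * (bmR m 1 * bmR m 0 * bmR m 1))
      (by rw [← this]; simp only [pow_succ, pow_zero, one_mul, mul_assoc])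
    rw [this]
    simp only [mul_inv_rev, hinv 0 (by omega), hinv 1 (by omega), mul_assoc]
  · rw [hl 0 (by omega)]; rfl
  · intro k hk
    rw [hl _ hk]; rfl
  · intro p p1 ps w
    refine (BmMatrix m).toCoxeterSystem.simple_induction_left w p1 ?_
    intro w i hw
    have := ps w i i.2 hw
    rwa [bmR_eq i.2] at this


/-- Let `B_m = [4,3,…,3]` (`m ≥ 3`) be the Coxeter group of the `m`-cube
with standard generators `r_0, …, r_{m-1}`.  If `φ : B_m → H` is a group homomorphism
which is injective on the dihedral subgroup `⟨r_0, r_1⟩` and on the subgroup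
`⟨r_1, …, r_{m-1}⟩`, then the kernel of `φ` is contained in the center `{±e}` of `B_m`. -/
theorem stmt_4 (m : ℕ) (hm : 3 ≤ m) (H : Type*) [Group H]
    (φ : (BmMatrix m).Group →* H)
    (h01 : Set.InjOn φ (↑(Subgroup.closure
      {(BmMatrix m).simple ⟨0, by omega⟩, (BmMatrix m).simple ⟨1, by omega⟩}) :
        Set (BmMatrix m).Group))
    (hrest : Set.InjOn φ (↑(Subgroup.closure
      ((BmMatrix m).simple '' {i : Fin m | i ≠ ⟨0, by omega⟩})) : Set (BmMatrix m).Group)) :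
    φ.ker ≤ Subgroup.center (BmMatrix m).Group := by
  have hs := bm_setup m hm
  refine hs.main φ.ker ?_
  intro hmem
  have e0 : bmR m 0 = (BmMatrix m).simple ⟨0, by omega⟩ := bmR_eq _
  have e1 : bmR m 1 = (BmMatrix m).simple ⟨1, by omega⟩ := bmR_eq _
  have m0 : bmR m 0 ∈ Subgroup.closure
      {(BmMatrix m).simple ⟨0, by omega⟩, (BmMatrix m).simple ⟨1, by omega⟩} :=
    Subgroup.subset_closure (by rw [e0]; simp)
  have m1 : bmR m 1 ∈ Subgroup.closure
      {(BmMatrix m).simple ⟨0, by omega⟩, (BmMatrix m).simple ⟨1, by omega⟩} :=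
    Subgroup.subset_closure (by rw [e1]; simp)
  have h1 : bmR m 0 * (bmR m 1 * bmR m 0 * bmR m 1) = 1 :=
    h01 (mul_mem m0 (mul_mem (mul_mem m1 m0) m1)) (one_mem _)
      (by rw [map_one]; exact hmem)
  have h2 := congrArg ((BmMatrix m).toCoxeterSystem.lift ⟨_, bm_sig_liftable m⟩) h1
  have l0 : (BmMatrix m).toCoxeterSystem.lift ⟨_, bm_sig_liftable m⟩ (bmR m 0) = bmSig 0 := by
    rw [e0]
    exact (BmMatrix m).toCoxeterSystem.lift_apply_simple (bm_sig_liftable m) ⟨0, by omega⟩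
  have l1 : (BmMatrix m).toCoxeterSystem.lift ⟨_, bm_sig_liftable m⟩ (bmR m 1) = bmSig 1 := by
    rw [e1]
    exact (BmMatrix m).toCoxeterSystem.lift_apply_simple (bm_sig_liftable m) ⟨1, by omega⟩
  simp only [map_mul, l0, l1, map_one] at h2
  have h3 := congrArg (fun e : Equiv.Perm (ℕ × Bool) => e (0, false)) h2
  revert h3
  decide
end

section
/- Let F_4 = [3,4,3] be the Coxeter group of the 24-cell, with standard generators r_0, r_1, r_2, r_3. If φ : F_4 → H is a group homomorphism which is injective on the subgroups ⟨r_0, r_1, r_2⟩ and ⟨r_1, r_2, r_3⟩, then the kernel of φ is contained in {±e}, the center of F_4. -/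
open CoxeterMatrix

set_option linter.unusedSimpArgs false

namespace FFour

/-- The relations of `[3,4,3]`. -/
structure Rel {G : Type*} [Group G] (r0 r1 r2 r3 : G) : Prop where
  s0 : r0 * r0 = 1
  s1 : r1 * r1 = 1
  s2 : r2 * r2 = 1
  s3 : r3 * r3 = 1
  b01 : r0 * r1 * r0 = r1 * r0 * r1
  b23 : r3 * r2 * r3 = r2 * r3 * r2
  c02 : r2 * r0 = r0 * r2
  c03 : r3 * r0 = r0 * r3
  c13 : r3 * r1 = r1 * r3
  b12 : r1 * r2 * r1 * r2 = r2 * r1 * r2 * r1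

theorem lft {G : Type*} [Group G] {a b u : G} (h : a * b = u) : ∀ y, a * (b * y) = u * y := by
  intro y; rw [← mul_assoc, h]

/-- In `B₃`: with `c = (b t)^2` and `d = a c a`, we have `b d b = c d = d c`. -/
theorem b3 {G : Type*} [Group G] {a b t : G} (ha : a * a = 1) (hb : b * b = 1) (ht : t * t = 1)
    (hab : a * b * a = b * a * b) (hat : t * a = a * t)
    (hbt : b * t * b * t = t * b * t * b) :
    (b * (a * (b * t * b * t) * a) = (b * t * b * t) * (a * (b * t * b * t) * a) * b) ∧
    (a * (b * t * b * t) * a) * (b * t * b * t) = (b * t * b * t) * (a * (b * t * b * t) * a) := by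
  obtain ⟨s, hs⟩ : ∃ s, s = b * t * b := ⟨_, rfl⟩
  obtain ⟨u, hu⟩ : ∃ u, u = a * s * a := ⟨_, rfl⟩
  have hst : s * t = t * s := by rw [hs, hbt]; group
  have hut : u * t = t * u := by
    rw [hu]
    calc a * s * a * t = a * s * (t * a) := by rw [hat]; group
      _ = a * (s * t) * a := by group
      _ = (a * t) * s * a := by rw [hst]; group
      _ = t * (a * s * a) := by rw [← hat]; group
  have hbu : b * u = u * b := by
    have h : b * u * b = u := by
      rw [hu, hs]
      calc b * (a * (b * t * b) * a) * b = (b * a * b) * t * (b * a * b) := by group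
        _ = a * b * (a * t) * a * b * a := by rw [← hab]; group
        _ = a * b * t * (a * a) * b * a := by rw [← hat]; group
        _ = a * (b * t * b) * a := by rw [ha]; group
    calc b * u = b * u * (b * b) := by rw [hb, mul_one]
      _ = (b * u * b) * b := by group
      _ = u * b := by rw [h]
  have hsu : s * u = u * s := by
    rw [hs]
    calc b * t * b * u = b * t * (b * u) := by group
      _ = b * (t * u) * b := by rw [hbu]; group
      _ = (b * u) * t * b := by rw [← hut]; group
      _ = u * (b * t * b) := by rw [hbu]; group
  have hc : b * t * b * t = s * t := by rw [hs]
  have hd : a * (s * t) * a = u * t := by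
    rw [hu]
    calc a * (s * t) * a = a * s * (t * a) := by group
      _ = a * s * a * t := by rw [hat]; group
  rw [hc, hd]
  have e1 : u * t * (s * t) = u * s := by
    calc u * t * (s * t) = u * (t * s) * t := by group
      _ = u * s * (t * t) := by rw [← hst]; group
      _ = u * s := by rw [ht, mul_one]
  have e2 : s * t * (u * t) = u * s := by
    calc s * t * (u * t) = s * (t * u) * t := by group
      _ = s * u * (t * t) := by rw [← hut]; group
      _ = u * s := by rw [ht, mul_one, hsu]
  refine ⟨?_, by rw [e1, e2]⟩
  rw [e2]
  calc b * (u * t) = (b * u) * t * (b * b) := by rw [hb]; group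
    _ = u * (b * t * b) * b := by rw [hbu]; group
    _ = u * s * b := by rw [hs]

/-- Conjugation data for `c`, `d = c^r0`, `f = c^r3`, `g = c^(r0 r3)`. -/
structure Dat {G : Type*} [Group G] (r0 r1 r2 r3 c d f g : G) : Prop where
  cc : c * c = 1
  dd : d * d = 1
  ff : f * f = 1
  gg : g * g = 1
  dc : d * c = c * d
  fc : f * c = c * f
  gd : g * d = d * g
  gf : g * f = f * g
  r0c : r0 * c = d * r0
  r0d : r0 * d = c * r0
  r0f : r0 * f = g * r0
  r0g : r0 * g = f * r0
  r1c : r1 * c = c * r1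
  r1d : r1 * d = c * d * r1
  r1f : r1 * f = f * r1
  r1g : r1 * g = f * g * r1
  r2c : r2 * c = c * r2
  r2d : r2 * d = d * r2
  r2f : r2 * f = c * f * r2
  r2g : r2 * g = d * g * r2
  r3c : r3 * c = f * r3
  r3d : r3 * d = g * r3
  r3f : r3 * f = c * r3
  r3g : r3 * g = d * r3
  r21 : r2 * r1 = c * r1 * r2

theorem conj_eq {G : Type*} [Group G] {r x y : G} (hr : r * r = 1) (h : r * x * r = y) :
    r * x = y * r := by
  rw [← h, mul_assoc, hr, mul_one]

theorem conj_mul {G : Type*} [Group G] {r : G} (hr : r * r = 1) (x y : G) :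
    r * (x * y) * r = (r * x * r) * (r * y * r) := by
  calc r * (x * y) * r = r * x * 1 * y * r := by group
    _ = _ := by rw [← hr]; group

theorem conj_comm {G : Type*} [Group G] {r x y : G} (hr : r * r = 1) (h : x * y = y * x) :
    (r * x * r) * (r * y * r) = (r * y * r) * (r * x * r) := by
  rw [← conj_mul hr, h, conj_mul hr]

theorem conj_conj {G : Type*} [Group G] {r : G} (hr : r * r = 1) (x : G) :
    r * (r * x * r) * r = x := by
  calc r * (r * x * r) * r = (r * r) * x * (r * r) := by group
    _ = x := by rw [hr]; group

theorem of_conj_eq {G : Type*} [Group G] {r x y : G} (hr : r * r = 1) (h : r * x = y * r) :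
    r * x * r = y := by
  rw [h, mul_assoc, hr, mul_one]

theorem Rel.dat {G : Type*} [Group G] {r0 r1 r2 r3 : G} (h : Rel r0 r1 r2 r3) {c d f g : G}
    (hc : c = r1 * r2 * r1 * r2) (hd : d = r0 * c * r0) (hf : f = r3 * c * r3)
    (hg : g = r3 * d * r3) : Dat r0 r1 r2 r3 c d f g := by
  obtain ⟨s0, s1, s2, s3, b01, b23, c02, c03, c13, b12⟩ := h
  have hc' : c = r2 * r1 * r2 * r1 := hc.trans b12
  have hg' : g = r0 * f * r0 := by
    rw [hg, hd, hf]
    calc r3 * (r0 * c * r0) * r3 = (r3 * r0) * c * (r0 * r3) := by group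
      _ = r0 * (r3 * c * r3) * r0 := by rw [c03, ← c03]; simp only [mul_assoc, c03]
  obtain ⟨p1, p2⟩ := b3 s0 s1 s2 b01 c02 b12
  obtain ⟨q1, q2⟩ := b3 s3 s2 s1 b23 c13.symm b12.symm
  rw [← hc, ← hd] at p1 p2
  rw [← hc', ← hf] at q1 q2
  have cc : c * c = 1 := by
    calc c * c = (r1 * r2 * r1 * r2) * (r2 * r1 * r2 * r1) := by rw [← hc, ← hc']
      _ = 1 := by simp [mul_assoc, lft s1, lft s2, s1, s2]
  have sq : ∀ r : G, r * r = 1 → ∀ x, x * x = 1 → (r * x * r) * (r * x * r) = 1 := by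
    intro r hr x hx
    rw [← conj_mul hr, hx, mul_one, hr]
  have r1c : r1 * c = c * r1 := by
    conv_lhs => rw [hc]
    rw [hc']
    simp [mul_assoc, lft s1, s1]
  have r2c : r2 * c = c * r2 := by
    conv_lhs => rw [hc']
    rw [hc]
    simp [mul_assoc, lft s2, s2]
  have r2d : r2 * d = d * r2 := by
    rw [hd]
    simp only [mul_assoc, lft c02, lft r2c, c02]
  have r1f : r1 * f = f * r1 := by
    rw [hf]
    simp only [mul_assoc, lft c13.symm, lft r1c, c13.symm]
  have r3d : r3 * d * r3 = g := hg.symm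
  have r3c : r3 * c * r3 = f := hf.symm
  have r0c : r0 * c * r0 = d := hd.symm
  have r0f : r0 * f * r0 = g := hg'.symm
  have r13 : ∀ x, r1 * (r3 * x * r3) * r1 = r3 * (r1 * x * r1) * r3 := by
    intro x
    calc r1 * (r3 * x * r3) * r1 = (r1 * r3) * x * (r3 * r1) := by group
      _ = _ := by simp only [mul_assoc, lft c13, c13]
  have r02 : ∀ x, r2 * (r0 * x * r0) * r2 = r0 * (r2 * x * r2) * r0 := by
    intro x
    calc r2 * (r0 * x * r0) * r2 = (r2 * r0) * x * (r0 * r2) := by group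
      _ = _ := by simp only [mul_assoc, lft c02, c02]
  constructor
  · exact cc
  · rw [hd]; exact sq _ s0 _ cc
  · rw [hf]; exact sq _ s3 _ cc
  · rw [hg', hf]; exact sq _ s0 _ (sq _ s3 _ cc)
  · exact p2
  · exact q2
  · rw [← r0f, ← r0c]; exact conj_comm s0 q2
  · rw [← r3d, ← r3c]; exact conj_comm s3 p2
  · exact conj_eq s0 r0c
  · exact conj_eq s0 (by rw [← r0c, conj_conj s0])
  · exact conj_eq s0 r0f
  · exact conj_eq s0 (by rw [← r0f, conj_conj s0])
  · exact r1c
  · exact p1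
  · exact r1f
  · refine conj_eq s1 ?_
    rw [← r3d, r13, of_conj_eq s1 p1, conj_mul s3, r3c]
  · exact r2c
  · exact r2d
  · exact q1
  · refine conj_eq s2 ?_
    rw [← r0f, r02, of_conj_eq s2 q1, conj_mul s0, r0c]
  · exact conj_eq s3 r3c
  · exact conj_eq s3 r3d
  · exact conj_eq s3 (by rw [← r3c, conj_conj s3])
  · exact conj_eq s3 (by rw [← r3d, conj_conj s3])
  · rw [hc']
    simp [mul_assoc, lft s1, lft s2, s1, s2]

/-- The element `z = [c,g]` is a central involution. -/
theorem Rel.central {G : Type*} [Group G] {r0 r1 r2 r3 : G} (h : Rel r0 r1 r2 r3) {c d f g : G}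
    (hc : c = r1 * r2 * r1 * r2) (D : Dat r0 r1 r2 r3 c d f g) :
    (c * g * c * g) * (c * g * c * g) = 1 ∧ r0 * (c * g * c * g) = (c * g * c * g) * r0 ∧
    r1 * (c * g * c * g) = (c * g * c * g) * r1 ∧ r2 * (c * g * c * g) = (c * g * c * g) * r2 ∧
    r3 * (c * g * c * g) = (c * g * c * g) * r3 := by
  obtain ⟨z, hz⟩ : ∃ z, z = c * g * c * g := ⟨_, rfl⟩
  obtain ⟨u, hu⟩ : ∃ u, u = d * f * d * f := ⟨_, rfl⟩
  rw [← hz]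
  have r1z : r1 * z = z * r1 := by
    rw [hz]
    simp only [mul_assoc, lft D.r1c, D.r1c, lft D.r1g, D.r1g, lft D.gf, lft D.fc.symm,
      lft D.ff, one_mul]
  have r2z : r2 * z = z * r2 := by
    rw [hz]
    simp only [mul_assoc, lft D.r2c, D.r2c, lft D.r2g, D.r2g, lft D.gd, lft D.dc.symm,
      lft D.dd, one_mul]
  have r1u : r1 * u = u * r1 := by
    rw [hu]
    simp only [mul_assoc, lft D.r1d, D.r1f, lft D.r1f, lft D.dc, lft D.fc, lft D.cc]
    simp only [one_mul]
  have r0z : r0 * z = u * r0 := by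
    rw [hz, hu]; simp only [mul_assoc, lft D.r0c, lft D.r0g, D.r0g]
  have r0u : r0 * u = z * r0 := by
    rw [hz, hu]; simp only [mul_assoc, lft D.r0d, lft D.r0f, D.r0f]
  have r3u : r3 * u = z⁻¹ * r3 := by
    have : z⁻¹ = g * c * g * c := by
      rw [hz]; apply inv_eq_of_mul_eq_one_right
      simp [mul_assoc, lft D.gg, lft D.cc, D.cc]
    rw [this, hu]; simp only [mul_assoc, lft D.r3d, lft D.r3f, D.r3f]
  have huz : u = z := by
    have e1 : r0 * r1 * r0 * z = z * (r0 * r1 * r0) := by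
      simp only [mul_assoc, r0z, lft r1u, lft r0u]
    have e2 : r1 * r0 * r1 * z = u * (r1 * r0 * r1) := by
      simp only [mul_assoc, r1z, lft r0z, lft r1u]
    rw [h.b01, e2] at e1
    exact mul_right_cancel e1
  have cz : c * z = z * c := by
    rw [hc]; simp only [mul_assoc, r1z, r2z, lft r1z, lft r2z]
  have zz : z * z = 1 := by
    have : z * z = z * (c * z * c) := by
      rw [cz, mul_assoc z c c, D.cc, mul_one]
    rw [this, hz]
    simp [mul_assoc, lft D.gg, lft D.cc, D.cc]
  have hinv : z⁻¹ = z := inv_eq_of_mul_eq_one_right zz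
  rw [huz] at r0z r3u
  rw [hinv] at r3u
  exact ⟨zz, r0z, r1z, r2z, r3u⟩

/-- Full data in the quotient by the central involution. -/
structure Full {G : Type*} [Group G] (r0 r1 r2 r3 c d f g : G) : Prop
    extends Rel r0 r1 r2 r3, Dat r0 r1 r2 r3 c d f g where
  gc : g * c = c * g
  fd : f * d = d * f

section Quo

variable {G : Type*} [Group G] {r0 r1 r2 r3 c d f g : G}

/-- Elements `c^i d^j f^k g^l`. -/
def InE (c d f g x : G) : Prop :=
  ∃ i j k l : Bool, x = c ^ i.toNat * (d ^ j.toNat * (f ^ k.toNat * g ^ l.toNat))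

/-- The six elements of a dihedral group of order six. -/
def InA (a b x : G) : Prop :=
  x = 1 ∨ x = a ∨ x = b ∨ x = a * b ∨ x = b * a ∨ x = a * (b * a)

theorem Full.xor_mul (D : Full r0 r1 r2 r3 c d f g) (i j k l i' j' k' l' : Bool) :
    c ^ i.toNat * (d ^ j.toNat * (f ^ k.toNat * g ^ l.toNat)) *
      (c ^ i'.toNat * (d ^ j'.toNat * (f ^ k'.toNat * g ^ l'.toNat))) =
    c ^ (xor i i').toNat * (d ^ (xor j j').toNat * (f ^ (xor k k').toNat *
      g ^ (xor l l').toNat)) := by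
  have Hc : c ^ (xor i i').toNat = c ^ i.toNat * c ^ i'.toNat := by
    cases i <;> cases i' <;> simp [D.cc]
  have Hd : d ^ (xor j j').toNat = d ^ j.toNat * d ^ j'.toNat := by
    cases j <;> cases j' <;> simp [D.dd]
  have Hf : f ^ (xor k k').toNat = f ^ k.toNat * f ^ k'.toNat := by
    cases k <;> cases k' <;> simp [D.ff]
  have Hg : g ^ (xor l l').toNat = g ^ l.toNat * g ^ l'.toNat := by
    cases l <;> cases l' <;> simp [D.gg]
  have dc : ∀ m n : ℕ, d ^ m * c ^ n = c ^ n * d ^ m := fun m n =>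
    (Commute.pow_pow (show Commute d c from D.dc) m n)
  have fc : ∀ m n : ℕ, f ^ m * c ^ n = c ^ n * f ^ m := fun m n =>
    (Commute.pow_pow (show Commute f c from D.fc) m n)
  have gc : ∀ m n : ℕ, g ^ m * c ^ n = c ^ n * g ^ m := fun m n =>
    (Commute.pow_pow (show Commute g c from D.gc) m n)
  have fd : ∀ m n : ℕ, f ^ m * d ^ n = d ^ n * f ^ m := fun m n =>
    (Commute.pow_pow (show Commute f d from D.fd) m n)
  have gd : ∀ m n : ℕ, g ^ m * d ^ n = d ^ n * g ^ m := fun m n =>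
    (Commute.pow_pow (show Commute g d from D.gd) m n)
  have gf : ∀ m n : ℕ, g ^ m * f ^ n = f ^ n * g ^ m := fun m n =>
    (Commute.pow_pow (show Commute g f from D.gf) m n)
  rw [Hc, Hd, Hf, Hg]
  simp only [mul_assoc, lft (dc _ _), lft (fc _ _), lft (gc _ _), lft (fd _ _), lft (gd _ _),
    lft (gf _ _)]

theorem Full.inE_mul (D : Full r0 r1 r2 r3 c d f g) {x y : G} (hx : InE c d f g x)
    (hy : InE c d f g y) : InE c d f g (x * y) := by
  obtain ⟨i, j, k, l, rfl⟩ := hx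
  obtain ⟨i', j', k', l', rfl⟩ := hy
  exact ⟨xor i i', xor j j', xor k k', xor l l', D.xor_mul ..⟩

theorem inE_one : InE c d f g 1 := ⟨false, false, false, false, by simp⟩
theorem inE_c : InE c d f g c := ⟨true, false, false, false, by simp⟩
theorem inE_d : InE c d f g d := ⟨false, true, false, false, by simp⟩
theorem inE_f : InE c d f g f := ⟨false, false, true, false, by simp⟩
theorem inE_g : InE c d f g g := ⟨false, false, false, true, by simp⟩

theorem Full.push (D : Full r0 r1 r2 r3 c d f g) {r : G}
    (hc : ∃ y, InE c d f g y ∧ r * c = y * r) (hd : ∃ y, InE c d f g y ∧ r * d = y * r)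
    (hf : ∃ y, InE c d f g y ∧ r * f = y * r) (hg : ∃ y, InE c d f g y ∧ r * g = y * r)
    {e : G} (he : InE c d f g e) : ∃ e', InE c d f g e' ∧ r * e = e' * r := by
  have hm : ∀ x y, (∃ e', InE c d f g e' ∧ r * x = e' * r) →
      (∃ e', InE c d f g e' ∧ r * y = e' * r) → ∃ e', InE c d f g e' ∧ r * (x * y) = e' * r := by
    rintro x y ⟨u, hu, hu'⟩ ⟨v, hv, hv'⟩
    exact ⟨u * v, D.inE_mul hu hv, by rw [lft hu', mul_assoc, mul_assoc, hv']⟩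
  have hp : ∀ x (i : Bool), (∃ e', InE c d f g e' ∧ r * x = e' * r) →
      (∃ e', InE c d f g e' ∧ r * x ^ i.toNat = e' * r) := by
    intro x i hx
    cases i
    · exact ⟨1, inE_one, by simp⟩
    · simpa using hx
  obtain ⟨i, j, k, l, rfl⟩ := he
  exact hm _ _ (hp _ _ hc) (hm _ _ (hp _ _ hd) (hm _ _ (hp _ _ hf) (hp _ _ hg)))

theorem Full.push0 (D : Full r0 r1 r2 r3 c d f g) {e : G} (he : InE c d f g e) :
    ∃ e', InE c d f g e' ∧ r0 * e = e' * r0 :=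
  D.push ⟨d, inE_d, D.r0c⟩ ⟨c, inE_c, D.r0d⟩ ⟨g, inE_g, D.r0f⟩ ⟨f, inE_f, D.r0g⟩ he

theorem Full.push1 (D : Full r0 r1 r2 r3 c d f g) {e : G} (he : InE c d f g e) :
    ∃ e', InE c d f g e' ∧ r1 * e = e' * r1 :=
  D.push ⟨c, inE_c, D.r1c⟩ ⟨_, D.inE_mul inE_c inE_d, D.r1d⟩ ⟨f, inE_f, D.r1f⟩
    ⟨_, D.inE_mul inE_f inE_g, D.r1g⟩ he

theorem Full.push2 (D : Full r0 r1 r2 r3 c d f g) {e : G} (he : InE c d f g e) :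
    ∃ e', InE c d f g e' ∧ r2 * e = e' * r2 :=
  D.push ⟨c, inE_c, D.r2c⟩ ⟨d, inE_d, D.r2d⟩ ⟨_, D.inE_mul inE_c inE_f, D.r2f⟩
    ⟨_, D.inE_mul inE_d inE_g, D.r2g⟩ he

theorem Full.push3 (D : Full r0 r1 r2 r3 c d f g) {e : G} (he : InE c d f g e) :
    ∃ e', InE c d f g e' ∧ r3 * e = e' * r3 :=
  D.push ⟨f, inE_f, D.r3c⟩ ⟨g, inE_g, D.r3d⟩ ⟨c, inE_c, D.r3f⟩ ⟨d, inE_d, D.r3g⟩ he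

theorem inA_left {a b x : G} (ha : a * a = 1) (hb : b * b = 1) (hab : a * b * a = b * a * b)
    (hx : InA a b x) : InA a b (a * x) ∧ InA a b (b * x) := by
  have hab' : b * (a * b) = a * (b * a) := by rw [← mul_assoc, ← hab, mul_assoc]
  have h3 : b * (a * (b * a)) = a * b := by rw [← hab', ← mul_assoc, hb, one_mul]
  unfold InA
  rcases hx with rfl | rfl | rfl | rfl | rfl | rfl <;>
    simp only [mul_one, ha, hb, lft ha, lft hb, one_mul, hab', h3, true_or, or_true, and_self]

/-- `r2 a = e a r2`, for `a` in the first dihedral group. -/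
theorem Full.swap2 (D : Full r0 r1 r2 r3 c d f g) {a : G} (ha : InA r0 r1 a) :
    ∃ e, InE c d f g e ∧ r2 * a = e * (a * r2) := by
  rcases ha with rfl | rfl | rfl | rfl | rfl | rfl
  · exact ⟨1, inE_one, by simp⟩
  · exact ⟨1, inE_one, by simp [D.c02]⟩
  · exact ⟨c, inE_c, by simp only [D.r21, mul_assoc]⟩
  · exact ⟨d, inE_d, by simp only [D.r21, mul_assoc, lft D.c02, lft D.r0c]⟩
  · exact ⟨c, inE_c, by simp only [lft D.r21, mul_assoc, D.c02]⟩
  · exact ⟨d, inE_d, by simp only [lft D.r21, mul_assoc, lft D.c02, D.c02, lft D.r0c]⟩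

theorem Full.swap3 (D : Full r0 r1 r2 r3 c d f g) {a : G} (ha : InA r0 r1 a) :
    r3 * a = a * r3 := by
  rcases ha with rfl | rfl | rfl | rfl | rfl | rfl <;>
    simp only [mul_one, one_mul, mul_assoc, D.c03, D.c13, lft D.c03, lft D.c13]

theorem Full.decomp (D : Full r0 r1 r2 r3 c d f g)
    (hgen : Subgroup.closure {r0, r1, r2, r3} = (⊤ : Subgroup G)) (x : G) :
    ∃ e a b, InE c d f g e ∧ InA r0 r1 a ∧ InA r3 r2 b ∧ x = e * (a * b) := by
  have step : ∀ r ∈ ({r0, r1, r2, r3} : Set G), ∀ y,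
      (∃ e a b, InE c d f g e ∧ InA r0 r1 a ∧ InA r3 r2 b ∧ y = e * (a * b)) →
      (∃ e a b, InE c d f g e ∧ InA r0 r1 a ∧ InA r3 r2 b ∧ r * y = e * (a * b)) := by
    rintro r hr y ⟨e, a, b, he, ha, hb, rfl⟩
    have hA := inA_left D.s0 D.s1 D.b01 ha
    have hB := inA_left D.s3 D.s2 D.b23 hb
    rcases hr with rfl | rfl | rfl | rfl
    · obtain ⟨e', he', h⟩ := D.push0 he
      exact ⟨e', _, b, he', hA.1, hb, by rw [lft h]; simp only [mul_assoc]⟩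
    · obtain ⟨e', he', h⟩ := D.push1 he
      exact ⟨e', _, b, he', hA.2, hb, by rw [lft h]; simp only [mul_assoc]⟩
    · obtain ⟨e', he', h⟩ := D.push2 he
      obtain ⟨e'', he'', h'⟩ := D.swap2 ha
      exact ⟨e' * e'', a, _, D.inE_mul he' he'', ha, hB.2, by
        rw [lft h]; simp only [mul_assoc]; rw [lft h']; simp only [mul_assoc]⟩
    · obtain ⟨e', he', h⟩ := D.push3 he
      exact ⟨e', a, _, he', ha, hB.1, by
        rw [lft h, mul_assoc, lft (D.swap3 ha), mul_assoc]⟩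
  have hx : x ∈ Subgroup.closure {r0, r1, r2, r3} := by rw [hgen]; trivial
  induction hx using Subgroup.closure_induction_left with
  | one => exact ⟨1, 1, 1, inE_one, Or.inl rfl, Or.inl rfl, by simp⟩
  | mul_left r hr y _ ih => exact step r hr y ih
  | inv_mul_cancel r hr y _ ih =>
    have : r⁻¹ = r := by
      apply inv_eq_of_mul_eq_one_right
      rcases hr with rfl | rfl | rfl | rfl
      · exact D.s0
      · exact D.s1
      · exact D.s2
      · exact D.s3
    rw [this]; exact step r hr y ih

theorem mem_twist {N : Subgroup G} [hN : N.Normal] {r x : G} (hr : r * r = 1) (hx : x ∈ N) :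
    x * (r * (x * r)) ∈ N := by
  have h := hN.conj_mem x hx r
  rw [inv_eq_of_mul_eq_one_right hr, mul_assoc] at h
  exact N.mul_mem hx h

/-- A normal subgroup avoiding `c` meets `E` trivially. -/
theorem Full.indep (D : Full r0 r1 r2 r3 c d f g) {N : Subgroup G} [N.Normal] (hcN : c ∉ N)
    {i j k l : Bool} (h : c ^ i.toNat * (d ^ j.toNat * (f ^ k.toNat * g ^ l.toNat)) ∈ N) :
    i = false ∧ j = false ∧ k = false ∧ l = false := by
  have h1 := mem_twist D.s1 h
  have h12 := mem_twist D.s2 h1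
  have h2 := mem_twist D.s2 h
  cases i <;> cases j <;> cases k <;> cases l <;>
    simp only [Bool.toNat_true, Bool.toNat_false, pow_zero, pow_one, one_mul, mul_one, mul_assoc,
      D.cc, D.dd, D.ff, D.gg, lft D.cc, lft D.dd, lft D.ff, lft D.gg,
      D.dc, D.fc, D.gc, D.fd, D.gd, D.gf, lft D.dc, lft D.fc, lft D.gc, lft D.fd, lft D.gd,
      lft D.gf, D.r1c, D.r1d, D.r1f, D.r1g, D.r2c, D.r2d, D.r2f, D.r2g,
      lft D.r1c, lft D.r1d, lft D.r1f, lft D.r1g, lft D.r2c, lft D.r2d, lft D.r2f, lft D.r2g,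
      D.s1, D.s2, lft D.s1, lft D.s2] at h h1 h12 h2 <;>
    first
      | exact ⟨rfl, rfl, rfl, rfl⟩
      | exact absurd h hcN
      | exact absurd h1 hcN
      | exact absurd h12 hcN
      | exact absurd h2 hcN

theorem Full.inj (D : Full r0 r1 r2 r3 c d f g) (hc : c ≠ 1) {i j k l i' j' k' l' : Bool}
    (h : c ^ i.toNat * (d ^ j.toNat * (f ^ k.toNat * g ^ l.toNat)) =
      c ^ i'.toNat * (d ^ j'.toNat * (f ^ k'.toNat * g ^ l'.toNat))) :
    i = i' ∧ j = j' ∧ k = k' ∧ l = l' := by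
  have h2 := D.xor_mul i j k l i' j' k' l'
  rw [h, D.xor_mul] at h2
  simp only [Bool.xor_self, Bool.toNat_false, pow_zero, mul_one] at h2
  have h3 := D.indep (N := ⊥) (by simpa using hc) (Subgroup.mem_bot.mpr h2.symm)
  simpa using h3

theorem Full.gen_inv (D : Full r0 r1 r2 r3 c d f g) {r : G}
    (hr : r ∈ ({r0, r1, r2, r3} : Set G)) : r⁻¹ = r := by
  apply inv_eq_of_mul_eq_one_right
  rcases hr with rfl | rfl | rfl | rfl
  · exact D.s0
  · exact D.s1
  · exact D.s2
  · exact D.s3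

theorem Full.push_all (D : Full r0 r1 r2 r3 c d f g)
    (hgen : Subgroup.closure {r0, r1, r2, r3} = (⊤ : Subgroup G)) (x : G) :
    ∀ e, InE c d f g e → ∃ e', InE c d f g e' ∧ x * e = e' * x := by
  have step : ∀ r ∈ ({r0, r1, r2, r3} : Set G), ∀ y,
      (∀ e, InE c d f g e → ∃ e', InE c d f g e' ∧ y * e = e' * y) →
      (∀ e, InE c d f g e → ∃ e', InE c d f g e' ∧ r * y * e = e' * (r * y)) := by
    intro r hr y ih e he
    obtain ⟨e1, he1, h1⟩ := ih e he
    have : ∃ e', InE c d f g e' ∧ r * e1 = e' * r := by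
      rcases hr with rfl | rfl | rfl | rfl
      · exact D.push0 he1
      · exact D.push1 he1
      · exact D.push2 he1
      · exact D.push3 he1
    obtain ⟨e2, he2, h2⟩ := this
    exact ⟨e2, he2, by rw [mul_assoc, h1, lft h2, mul_assoc]⟩
  have hx : x ∈ Subgroup.closure {r0, r1, r2, r3} := by rw [hgen]; trivial
  induction hx using Subgroup.closure_induction_left with
  | one => intro e he; exact ⟨e, he, by simp⟩
  | mul_left r hr y _ ih => exact step r hr y ih
  | inv_mul_cancel r hr y _ ih => rw [D.gen_inv hr]; exact step r hr y ih

theorem Full.actA (D : Full r0 r1 r2 r3 c d f g) {a : G} (ha : InA r0 r1 a) :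
    ∃ p q p' q' : Bool, a * c = c ^ p.toNat * (d ^ q.toNat * a) ∧
      a * d = c ^ p'.toNat * (d ^ q'.toNat * a) ∧
      a * f = f ^ p.toNat * (g ^ q.toNat * a) ∧
      (p = true → q = false → p' = false → q' = true → a = 1) := by
  rcases ha with rfl | rfl | rfl | rfl | rfl | rfl
  · exact ⟨true, false, false, true, by simp⟩
  · exact ⟨false, true, true, false, by simp [D.r0c, D.r0d, D.r0f]⟩
  · exact ⟨true, false, true, true, by simp [D.r1c, D.r1d, D.r1f, mul_assoc]⟩
  · exact ⟨false, true, true, true, by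
      simp [D.r1c, D.r1d, D.r1f, mul_assoc, D.r0c, D.r0d, D.r0f, lft D.r0c, lft D.r0d,
        lft D.r0f, lft D.dc]⟩
  · exact ⟨true, true, true, false, by
      simp [mul_assoc, D.r0c, D.r0d, D.r0f, lft D.r1c, lft D.r1d, lft D.r1g]⟩
  · exact ⟨true, true, false, true, by
      simp [mul_assoc, D.r0c, D.r0d, D.r0f, lft D.r1c, lft D.r1d, lft D.r1g, lft D.r0c, lft D.r0d,
        lft D.r0f, lft D.r0g, lft D.dc, lft D.gf]⟩

theorem Full.actB (D : Full r0 r1 r2 r3 c d f g) {b : G} (hb : InA r3 r2 b) :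
    ∃ p q p' q' : Bool, b * c = c ^ p.toNat * (f ^ q.toNat * b) ∧
      b * f = c ^ p'.toNat * (f ^ q'.toNat * b) ∧
      b * d = d ^ p.toNat * (g ^ q.toNat * b) ∧
      (p = true → q = false → p' = false → q' = true → b = 1) := by
  rcases hb with rfl | rfl | rfl | rfl | rfl | rfl
  · exact ⟨true, false, false, true, by simp⟩
  · exact ⟨false, true, true, false, by simp [D.r3c, D.r3d, D.r3f]⟩
  · exact ⟨true, false, true, true, by simp [D.r2c, D.r2d, D.r2f, mul_assoc]⟩
  · exact ⟨false, true, true, true, by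
      simp [D.r2c, D.r2d, D.r2f, mul_assoc, D.r3c, D.r3d, D.r3f, lft D.r3c, lft D.r3d,
        lft D.r3f, lft D.fc]⟩
  · exact ⟨true, true, true, false, by
      simp [mul_assoc, D.r3c, D.r3d, D.r3f, lft D.r2c, lft D.r2f, lft D.r2g]⟩
  · exact ⟨true, true, false, true, by
      simp [mul_assoc, D.r3c, D.r3d, D.r3f, lft D.r2c, lft D.r2f, lft D.r2g, lft D.r3c, lft D.r3d,
        lft D.r3f, lft D.r3g, lft D.fc, lft D.gd]⟩

theorem Full.faithful (D : Full r0 r1 r2 r3 c d f g) (hc1 : c ≠ 1) {a b : G} (ha : InA r0 r1 a)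
    (hb : InA r3 r2 b) (hc : a * b * c = c * (a * b)) (hd : a * b * d = d * (a * b))
    (hf : a * b * f = f * (a * b)) : a = 1 ∧ b = 1 := by
  obtain ⟨p, q, p', q', ac, ad, af, a1⟩ := D.actA ha
  obtain ⟨s, t, s', t', bc, bf, bd, b1⟩ := D.actB hb
  have key : c ^ (p && s).toNat * (d ^ (q && s).toNat * (f ^ (p && t).toNat *
      g ^ (q && t).toNat)) = c ^ true.toNat * (d ^ false.toNat * (f ^ false.toNat *
      g ^ false.toNat)) := by
    apply mul_right_cancel (b := a * b)
    simp only [Bool.toNat_true, Bool.toNat_false, pow_zero, pow_one, mul_one]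
    rw [← hc, mul_assoc a b c, bc]
    cases s <;> cases t <;> simp [mul_assoc, lft ac, lft af]
  have k1 := D.inj hc1 key
  simp only [Bool.and_eq_true] at k1
  obtain ⟨⟨rfl, rfl⟩, k2, k3, -⟩ := k1
  simp only [Bool.and_true, Bool.true_and] at k2 k3
  subst k2 k3
  simp only [Bool.toNat_true, Bool.toNat_false, pow_zero, pow_one, one_mul] at ac af bc bd
  have key2 : c ^ p'.toNat * (d ^ q'.toNat * (f ^ false.toNat * g ^ false.toNat)) =
      c ^ false.toNat * (d ^ true.toNat * (f ^ false.toNat * g ^ false.toNat)) := by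
    apply mul_right_cancel (b := a * b)
    simp only [Bool.toNat_true, Bool.toNat_false, pow_zero, pow_one, mul_one, one_mul]
    rw [← hd, mul_assoc a b d, bd, lft ad]
    simp only [mul_assoc]
  have key3 : c ^ s'.toNat * (d ^ false.toNat * (f ^ t'.toNat * g ^ false.toNat)) =
      c ^ false.toNat * (d ^ false.toNat * (f ^ true.toNat * g ^ false.toNat)) := by
    apply mul_right_cancel (b := a * b)
    simp only [Bool.toNat_true, Bool.toNat_false, pow_zero, pow_one, mul_one, one_mul]
    rw [← hf, mul_assoc a b f, bf]
    cases s' <;> cases t' <;> simp [mul_assoc, lft ac, lft af]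
  have k4 := D.inj hc1 key2
  have k5 := D.inj hc1 key3
  exact ⟨a1 rfl rfl k4.1 k4.2.1, b1 rfl rfl k5.1 k5.2.2.1⟩

theorem Full.trivial (D : Full r0 r1 r2 r3 c d f g)
    (hgen : Subgroup.closure {r0, r1, r2, r3} = (⊤ : Subgroup G)) {N : Subgroup G}
    [hN : N.Normal] (hcN : c ∉ N) : N = ⊥ := by
  have hc1 : c ≠ 1 := fun h => hcN (h ▸ N.one_mem)
  have hEN : ∀ y, InE c d f g y → y ∈ N → y = 1 := by
    rintro y ⟨i, j, k, l, rfl⟩ hy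
    obtain ⟨rfl, rfl, rfl, rfl⟩ := D.indep hcN hy
    simp
  rw [Subgroup.eq_bot_iff_forall]
  intro x hx
  have hcomm : ∀ y, InE c d f g y → y * y = 1 → x * y = y * x := by
    intro y hy hyy
    obtain ⟨y', hy', h⟩ := D.push_all hgen x y hy
    have hm : y' * y ∈ N := by
      have e : y' * y = x * (y * x⁻¹ * y⁻¹) := by
        rw [← mul_assoc, ← mul_assoc, h, inv_eq_of_mul_eq_one_right hyy]; group
      rw [e]
      exact N.mul_mem hx (hN.conj_mem _ (N.inv_mem hx) y)
    have h1 := hEN _ (D.inE_mul hy' hy) hm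
    have : y' = y := by rw [eq_inv_of_mul_eq_one_left h1, inv_eq_of_mul_eq_one_right hyy]
    rw [h, this]
  obtain ⟨e, a, b, he, ha, hb, rfl⟩ := D.decomp hgen x
  have hEcomm : ∀ y, InE c d f g y → e * y = y * e := by
    rintro y ⟨i', j', k', l', rfl⟩
    obtain ⟨i, j, k, l, rfl⟩ := he
    rw [D.xor_mul, D.xor_mul]
    simp only [Bool.xor_comm]
  have hab : ∀ y, InE c d f g y → y * y = 1 → a * b * y = y * (a * b) := by
    intro y hy hyy
    have h := hcomm y hy hyy
    rw [mul_assoc, ← mul_assoc y, ← hEcomm y hy, mul_assoc e y] at h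
    exact mul_left_cancel h
  obtain ⟨rfl, rfl⟩ := D.faithful hc1 ha hb (hab c inE_c D.cc) (hab d inE_d D.dd)
    (hab f inE_f D.ff)
  rw [mul_one, mul_one] at hx ⊢
  exact hEN e he hx

end Quo

/-- A normal subgroup that does not contain `c` lies in the center. -/
theorem Rel.le_center {G : Type*} [Group G] {r0 r1 r2 r3 : G} (h : Rel r0 r1 r2 r3)
    (hgen : Subgroup.closure {r0, r1, r2, r3} = (⊤ : Subgroup G)) {K : Subgroup G}
    [hK : K.Normal] (hcK : r1 * r2 * r1 * r2 ∉ K) : K ≤ Subgroup.center G := by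
  obtain ⟨c, hc⟩ : ∃ c, c = r1 * r2 * r1 * r2 := ⟨_, rfl⟩
  obtain ⟨d, hd⟩ : ∃ d, d = r0 * c * r0 := ⟨_, rfl⟩
  obtain ⟨f, hf⟩ : ∃ f, f = r3 * c * r3 := ⟨_, rfl⟩
  obtain ⟨g, hg⟩ : ∃ g, g = r3 * d * r3 := ⟨_, rfl⟩
  rw [← hc] at hcK
  have D := h.dat hc hd hf hg
  obtain ⟨zz, z0, z1, z2, z3⟩ := h.central hc D
  obtain ⟨z, hz⟩ : ∃ z, z = c * g * c * g := ⟨_, rfl⟩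
  rw [← hz] at zz z0 z1 z2 z3
  have hzc : z ∈ Subgroup.center G := by
    rw [Subgroup.mem_center_iff]
    intro x
    have hx : x ∈ Subgroup.centralizer {z} := by
      have : (⊤ : Subgroup G) ≤ Subgroup.centralizer {z} := by
        rw [← hgen, Subgroup.closure_le]
        rintro r (rfl | rfl | rfl | rfl) <;>
          simp only [SetLike.mem_coe, Subgroup.mem_centralizer_singleton_iff] <;> assumption
      exact this trivial
    exact (Subgroup.mem_centralizer_singleton_iff.mp hx)
  have hle : Subgroup.zpowers z ≤ Subgroup.center G := by
    rwa [Subgroup.zpowers_le]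
  have hmem : ∀ y ∈ Subgroup.zpowers z, y = 1 ∨ y = z := by
    rintro y ⟨n, rfl⟩
    have z2' : z ^ (2 : ℤ) = 1 := by rw [zpow_two, zz]
    rcases Int.even_or_odd' n with ⟨m, rfl | rfl⟩
    · left; simp [zpow_mul, z2']
    · right; simp [zpow_add, zpow_mul, z2']
  have : (Subgroup.zpowers z).Normal :=
    ⟨fun n hn x => by
      rw [Subgroup.mem_center_iff.mp (hle hn) x, mul_inv_cancel_right]; exact hn⟩
  let q := QuotientGroup.mk' (Subgroup.zpowers z)
  have hq : Function.Surjective q := QuotientGroup.mk'_surjective _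
  have hqz : q z = 1 := (QuotientGroup.eq_one_iff z).mpr (Subgroup.mem_zpowers z)
  have R : Rel (q r0) (q r1) (q r2) (q r3) := by
    constructor <;> simp only [← map_mul, ← map_one q]
    · rw [h.s0]
    · rw [h.s1]
    · rw [h.s2]
    · rw [h.s3]
    · rw [h.b01]
    · rw [h.b23]
    · rw [h.c02]
    · rw [h.c03]
    · rw [h.c13]
    · rw [h.b12]
  have DQ : Dat (q r0) (q r1) (q r2) (q r3) (q c) (q d) (q f) (q g) :=
    R.dat (by rw [hc]; simp) (by rw [hd]; simp) (by rw [hf]; simp) (by rw [hg]; simp)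
  have gc : q g * q c = q c * q g := by
    have e : q c * q g * q c * q g = 1 := by
      have e0 := congrArg q hz
      rw [hqz] at e0
      simpa using e0.symm
    have e' : q c * (q c * q g * q c * q g) * q g = q c * q g := by rw [e, mul_one]
    rw [← e']
    simp [mul_assoc, lft DQ.cc, DQ.gg]
  have fd : q f * q d = q d * q f := by
    have e := conj_comm R.s0 gc
    rwa [of_conj_eq R.s0 DQ.r0c, of_conj_eq R.s0 DQ.r0g] at e
  have F : Full (q r0) (q r1) (q r2) (q r3) (q c) (q d) (q f) (q g) :=
    { toRel := R, toDat := DQ, gc := gc, fd := fd }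
  have : (K.map q).Normal := hK.map q hq
  have hgenQ : Subgroup.closure {q r0, q r1, q r2, q r3} = ⊤ := by
    have := congrArg (Subgroup.map q) hgen
    rw [MonoidHom.map_closure, Subgroup.map_top_of_surjective q hq] at this
    simpa [Set.image_insert_eq] using this
  have hcN : q c ∉ K.map q := by
    rintro ⟨k, hk, hkc⟩
    have h1 : k⁻¹ * c ∈ Subgroup.zpowers z := QuotientGroup.eq.mp hkc
    rcases hmem _ h1 with h2 | h2
    · have : k = c := inv_mul_eq_one.mp h2
      exact hcK (this ▸ hk)
    · have hkz : c = k * z := by rw [← h2]; group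
      have hk2 : k = g * c * g := by
        have : k = c * z := by rw [hkz, mul_assoc, zz, mul_one]
        rw [this, hz]; simp [mul_assoc, lft D.cc]
      have h3 := hK.conj_mem k hk g
      rw [inv_eq_of_mul_eq_one_right D.gg, hk2, conj_conj D.gg] at h3
      exact hcK h3
  have hbot := F.trivial hgenQ hcN
  intro k hk
  have : q k = 1 := by
    have : q k ∈ K.map q := Subgroup.mem_map_of_mem q hk
    rwa [hbot, Subgroup.mem_bot] at this
  exact hle ((QuotientGroup.eq_one_iff k).mp this)

theorem comm_of {G : Type*} [Group G] {a b : G} (ha : a * a = 1) (hb : b * b = 1)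
    (h : (a * b) ^ 2 = 1) : b * a = a * b := by
  have : (a * b)⁻¹ = a * b := inv_eq_of_mul_eq_one_right (by rw [← pow_two, h])
  rw [mul_inv_rev, inv_eq_of_mul_eq_one_right ha, inv_eq_of_mul_eq_one_right hb] at this
  exact this

theorem braid3_of {G : Type*} [Group G] {a b : G} (ha : a * a = 1) (hb : b * b = 1)
    (h : (a * b) ^ 3 = 1) : a * b * a = b * a * b := by
  have : (a * b * a) * (b * a * b) = 1 := by rw [← h]; simp [pow_succ, mul_assoc]
  rw [eq_inv_of_mul_eq_one_left this]
  simp [inv_eq_of_mul_eq_one_right ha, inv_eq_of_mul_eq_one_right hb, mul_assoc]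

theorem braid4_of {G : Type*} [Group G] {a b : G} (ha : a * a = 1) (hb : b * b = 1)
    (h : (a * b) ^ 4 = 1) : a * b * a * b = b * a * b * a := by
  have : (a * b * a * b) * (a * b * a * b) = 1 := by rw [← h]; simp [pow_succ, mul_assoc]
  rw [eq_inv_of_mul_eq_one_left this]
  simp [inv_eq_of_mul_eq_one_right ha, inv_eq_of_mul_eq_one_right hb, mul_assoc]

theorem rel_F4 : Rel (F₄.simple 0) (F₄.simple 1) (F₄.simple 2) (F₄.simple 3) := by
  have key : ∀ i j, (F₄.simple i * F₄.simple j) ^ F₄ i j = 1 := fun i j =>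
    F₄.toCoxeterSystem.simple_mul_simple_pow i j
  have sq : ∀ i, F₄.simple i * F₄.simple i = 1 := fun i =>
    F₄.toCoxeterSystem.simple_mul_simple_self i
  exact ⟨sq 0, sq 1, sq 2, sq 3, braid3_of (sq 0) (sq 1) (key 0 1),
    braid3_of (sq 3) (sq 2) (key 3 2), comm_of (sq 0) (sq 2) (key 0 2),
    comm_of (sq 0) (sq 3) (key 0 3), comm_of (sq 1) (sq 3) (key 1 3),
    braid4_of (sq 1) (sq 2) (key 1 2)⟩

theorem gen_F4 : Subgroup.closure {F₄.simple 0, F₄.simple 1, F₄.simple 2, F₄.simple 3} =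
    (⊤ : Subgroup F₄.Group) := by
  rw [← F₄.toCoxeterSystem.subgroup_closure_range_simple]
  congr 1
  ext x
  constructor
  · rintro (rfl | rfl | rfl | rfl)
    exacts [⟨0, rfl⟩, ⟨1, rfl⟩, ⟨2, rfl⟩, ⟨3, rfl⟩]
  · rintro ⟨i, rfl⟩
    change F₄.simple i ∈ _
    fin_cases i <;> simp

/-- The reflection representation on the root lattice. -/
def refl : Fin 4 → Matrix (Fin 4) (Fin 4) ℤ :=
  ![!![-1, 1, 0, 0; 0, 1, 0, 0; 0, 0, 1, 0; 0, 0, 0, 1],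
    !![1, 0, 0, 0; 1, -1, 1, 0; 0, 0, 1, 0; 0, 0, 0, 1],
    !![1, 0, 0, 0; 0, 1, 0, 0; 0, 2, -1, 1; 0, 0, 0, 1],
    !![1, 0, 0, 0; 0, 1, 0, 0; 0, 0, 1, 0; 0, 0, 1, -1]]

theorem refl_liftable : F₄.IsLiftable refl := by
  unfold IsLiftable
  decide

theorem c_ne_one : F₄.simple 1 * F₄.simple 2 * F₄.simple 1 * F₄.simple 2 ≠ 1 := by
  intro h
  have hs : ∀ i, F₄.toCoxeterSystem.lift ⟨refl, refl_liftable⟩ (F₄.simple i) = refl i :=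
    F₄.toCoxeterSystem.lift_apply_simple refl_liftable
  have := congrArg (F₄.toCoxeterSystem.lift ⟨refl, refl_liftable⟩) h
  simp only [map_mul, hs, map_one] at this
  revert this
  decide

end FFour

/-- Let `F₄ = [3,4,3]` be the Coxeter group of the 24-cell, with standard
generators `r_0, r_1, r_2, r_3`.  If `φ : F₄ → H` is a group homomorphism which is injective
on the subgroups `⟨r_0, r_1, r_2⟩` and `⟨r_1, r_2, r_3⟩` (each isomorphic to `B_3`), then
the kernel of `φ` is contained in the center `{±e}` of `F₄`. -/
theorem stmt_6 (H : Type*) [Group H] (φ : CoxeterMatrix.F₄.Group →* H)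
    (h012 : Set.InjOn φ (↑(Subgroup.closure
      {CoxeterMatrix.F₄.simple 0, CoxeterMatrix.F₄.simple 1, CoxeterMatrix.F₄.simple 2}) :
        Set CoxeterMatrix.F₄.Group))
    (h123 : Set.InjOn φ (↑(Subgroup.closure
      {CoxeterMatrix.F₄.simple 1, CoxeterMatrix.F₄.simple 2, CoxeterMatrix.F₄.simple 3}) :
        Set CoxeterMatrix.F₄.Group)) :
    φ.ker ≤ Subgroup.center CoxeterMatrix.F₄.Group := by
  refine FFour.rel_F4.le_center FFour.gen_F4 (K := φ.ker) fun h => FFour.c_ne_one ?_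
  have m1 := Subgroup.subset_closure (k := {F₄.simple 0, F₄.simple 1, F₄.simple 2})
    (show F₄.simple 1 ∈ _ by simp)
  have m2 := Subgroup.subset_closure (k := {F₄.simple 0, F₄.simple 1, F₄.simple 2})
    (show F₄.simple 2 ∈ _ by simp)
  refine h012 (mul_mem (mul_mem (mul_mem m1 m2) m1) m2) (one_mem _) ?_
  rw [map_one]
  exact h
end
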